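/- Let ρ, σ ∈ M_n(ℂ) be positive semidefinite with supp ρ ⊆ supp σ and ρσ ≠ σρ. Let f : [0,∞) → ℝ be continuous and admit the representation f(x) = f(0) + a·x + b·x² + ∫_{(0,∞)} ( x/(1+s) − x/(x+s) ) dμ(s) for all x ∈ (0,∞), where a ∈ ℝ, b ≥ 0, and μ is a positive measure on (0,∞) with ∫ (1+s)^{−2} dμ(s) < ∞. Assume the support of μ has cardinality at least that of the finite set spec(σ^{−1/2} ρ σ^{−1/2}) ∪ { a·b' : a an eigenvalue of ρ, b' an eigenvalue of the Moore–Penrose inverse σ^{−1} } (in particular an infinite support suffices). Then S_f(ρ‖σ) < Ŝ_f(ρ‖σ). -/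

import Mathlib

open Matrix MeasureTheory
open scoped ComplexOrder

/-- Moore–Penrose power of a matrix: apply `x ↦ x ^ t` to the nonzero eigenvalues
(with `0 ^ t := 0`) via the continuous functional calculus. -/
noncomputable def mpow {n : ℕ} (A : Matrix (Fin n) (Fin n) ℂ) (t : ℝ) :
    Matrix (Fin n) (Fin n) ℂ :=
  cfc (fun x : ℝ => if x = 0 then 0 else x ^ t) A

/-- Spectral projection of a Hermitian matrix `A` onto the eigenvalue `a`. -/
noncomputable def specProj {n : ℕ} (A : Matrix (Fin n) (Fin n) ℂ) (a : ℝ) :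
    Matrix (Fin n) (Fin n) ℂ :=
  cfc (fun x : ℝ => if x = a then (1 : ℝ) else 0) A

/-- The standard `f`-divergence of positive semidefinite matrices with `supp ρ ⊆ supp σ`:
`S_f(ρ‖σ) = Σ_{a ∈ spec ρ} Σ_{b ∈ spec σ, b ≠ 0} b·f(a/b)·Tr(P_a Q_b)`. -/
noncomputable def Sf {n : ℕ} (f : ℝ → ℝ) (ρ σ : Matrix (Fin n) (Fin n) ℂ) : ℝ :=
  ∑ᶠ a ∈ spectrum ℝ ρ, ∑ᶠ b ∈ spectrum ℝ σ,
    if b = 0 then 0 else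
      b * f (a / b) * (Matrix.trace (specProj ρ a * specProj σ b)).re

/-- The maximal `f`-divergence `Ŝ_f(ρ‖σ) = Tr(σ^{1/2} f(σ^{-1/2} ρ σ^{-1/2}) σ^{1/2})`,
with Moore–Penrose inverse square roots. -/
noncomputable def maxSf {n : ℕ} (f : ℝ → ℝ) (ρ σ : Matrix (Fin n) (Fin n) ℂ) : ℝ :=
  (Matrix.trace (mpow σ (1/2) *
    cfc f (mpow σ (-(1/2)) * ρ * mpow σ (-(1/2))) * mpow σ (1/2))).re

/-- The (topological) support of a measure on `ℝ`: points all of whose neighbourhoods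
have positive measure. -/
def measSupport (μ : Measure ℝ) : Set ℝ := {x : ℝ | ∀ U ∈ nhds x, 0 < μ U}

/-!
For fixed `ρ` and `σ`, both divergences are finite sums `∑ wᵢ f(xᵢ)` with nodes `xᵢ ≥ 0`, and they
agree for `f = 1`, `x`, `x²` because `supp ρ ⊆ supp σ`. Since
`x/(1+s) - x/(x+s) = x/(1+s) - 1 + s (x+s)⁻¹`, their difference is the `μ`-integral of `s` times the
difference for the resolvent `(x+s)⁻¹`, and it suffices to show that the latter is positive for
every `s > 0`.

For the resolvent, the divergences are `Tr Wσ` and `Tr Vσ`, where `ρW + sWσ = σ` and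
`V(ρ + sσ) = σ` with `Vσ` Hermitian. Completing squares,
`Tr Vσ - Tr Wσ = Tr (V - W*)ρ(V - W*)* + s Tr (V - W)σ(V - W)*`, so equality forces `Vρ = W*ρ` and
`Vσ = Wσ`. Then `C = ρσ - σρ` satisfies `C = sVC`, which leads to `ρσ⁻¹C = 0`, that is,
`ρσ⁻¹ρ = ρ²σ⁻¹`. The left side is Hermitian, so `σ⁻¹` commutes with `ρ²`, hence with its square root
`ρ`.
-/

section Quadrature

/-- The kernel `x/(1+s) - x/(x+s)` in the integral representation of an operator convex function,
as a function of `x` indexed by the parameter `s` of the representing measure. -/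
noncomputable def loewnerKernel (s x : ℝ) : ℝ :=
  x / (1 + s) - x / (x + s)

lemma loewnerKernel_eq_sub_add_mul_inv {s x : ℝ} (h : x + s ≠ 0) :
    loewnerKernel s x = x / (1 + s) - 1 + s * (x + s)⁻¹ := by
  unfold loewnerKernel
  field_simp
  ring

lemma abs_loewnerKernel_le {s x : ℝ} (hs : 0 < s) (hx : 0 < x) :
    |loewnerKernel s x| ≤ |x - 1| * (1 + x) * (1 + s)⁻¹ ^ 2 := by
  have hfactor : loewnerKernel s x = (x - 1) * (x * (x + s)⁻¹) * (1 + s)⁻¹ := by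
    unfold loewnerKernel
    field_simp
    ring
  have hdecay : x * (x + s)⁻¹ ≤ (1 + x) * (1 + s)⁻¹ := by
    rw [← div_eq_mul_inv, ← div_eq_mul_inv, div_le_div_iff₀ (by positivity) (by positivity)]
    nlinarith
  calc |loewnerKernel s x| = |x - 1| * (x * (x + s)⁻¹) * (1 + s)⁻¹ := by
        rw [hfactor, abs_mul, abs_mul, abs_of_pos (show 0 < x * (x + s)⁻¹ by positivity),
          abs_of_pos (show 0 < (1 + s)⁻¹ by positivity)]
    _ ≤ |x - 1| * ((1 + x) * (1 + s)⁻¹) * (1 + s)⁻¹ := by gcongr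
    _ = |x - 1| * (1 + x) * (1 + s)⁻¹ ^ 2 := by ring

lemma integral_lt_integral_of_ae_lt {α : Type*} [MeasurableSpace α] {μ : Measure α}
    {f g : α → ℝ} (hμ : μ ≠ 0) (hf : Integrable f μ) (hg : Integrable g μ)
    (hlt : ∀ᵐ x ∂μ, f x < g x) : ∫ x, f x ∂μ < ∫ x, g x ∂μ := by
  have hle : f ≤ᵐ[μ] g := hlt.mono fun _ => le_of_lt
  refine (integral_mono_ae hf hg hle).lt_of_ne fun heq => hμ ?_
  rw [← ae_eq_bot, ← Filter.eventually_false_iff_eq_bot]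
  filter_upwards [hlt, (integral_eq_iff_of_ae_le hf hg hle).1 heq] with x hlt heq
  exact hlt.ne heq

/-- A functional on real functions that is a finite weighted sum of evaluations at nonnegative
points; the weights may have any sign. For fixed `ρ` and `σ`, both divergences are of this form
as functions of `f`. -/
def IsFiniteQuadrature (L : (ℝ → ℝ) → ℝ) : Prop :=
  ∃ (ι : Type) (I : Finset ι) (w x : ι → ℝ), (∀ i ∈ I, 0 ≤ x i) ∧
    ∀ g, L g = ∑ i ∈ I, w i * g (x i)

variable {μ : Measure ℝ}

lemma ae_pos_of_measure_Iic_eq_zero (hμ0 : μ (Set.Iic 0) = 0) : ∀ᵐ s ∂μ, 0 < s := by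
  filter_upwards [measure_eq_zero_iff_ae_notMem.1 hμ0] with s hs
  exact not_le.1 hs

lemma integrable_loewnerKernel (hμ0 : μ (Set.Iic 0) = 0)
    (hμfin : ∫⁻ s, ENNReal.ofReal ((1 + s)⁻¹ ^ 2) ∂μ < ⊤) {x : ℝ} (hx : 0 ≤ x) :
    Integrable (fun s => loewnerKernel s x) μ := by
  obtain rfl | hx := hx.eq_or_lt
  · simp [loewnerKernel]
  have hint : Integrable (fun s : ℝ => (1 + s)⁻¹ ^ 2) μ := by
    refine ⟨by fun_prop, ?_⟩
    rwa [hasFiniteIntegral_iff_ofReal (.of_forall fun s => by positivity)]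
  refine (hint.const_mul (|x - 1| * (1 + x))).mono' (by unfold loewnerKernel; fun_prop) ?_
  filter_upwards [ae_pos_of_measure_Iic_eq_zero hμ0] with s hs
  exact abs_loewnerKernel_le hs hx

namespace IsFiniteQuadrature

variable {L L₁ L₂ : (ℝ → ℝ) → ℝ} {f : ℝ → ℝ} {a b : ℝ}

lemma apply_loewnerKernel (hL : IsFiniteQuadrature L) {s : ℝ} (hs : 0 < s) :
    L (loewnerKernel s) =
      L (fun x => x) / (1 + s) - L (fun _ => 1) + s * L (fun x => (x + s)⁻¹) := by
  obtain ⟨ι, I, w, x, hx, hL⟩ := hL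
  simp_rw [hL]
  rw [Finset.sum_div, Finset.mul_sum, ← Finset.sum_sub_distrib, ← Finset.sum_add_distrib]
  refine Finset.sum_congr rfl fun i hi => ?_
  have hne : x i + s ≠ 0 := (add_pos_of_nonneg_of_pos (hx i hi) hs).ne'
  rw [loewnerKernel_eq_sub_add_mul_inv hne]
  ring

lemma integrable_apply_loewnerKernel (hL : IsFiniteQuadrature L) (hμ0 : μ (Set.Iic 0) = 0)
    (hμfin : ∫⁻ s, ENNReal.ofReal ((1 + s)⁻¹ ^ 2) ∂μ < ⊤) :
    Integrable (fun s => L (loewnerKernel s)) μ := by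
  obtain ⟨ι, I, w, x, hx, hL⟩ := hL
  simp_rw [hL]
  exact integrable_finsetSum _ fun i hi =>
    (integrable_loewnerKernel hμ0 hμfin (hx i hi)).const_mul _

lemma apply_eq_add_integral (hL : IsFiniteQuadrature L) (hμ0 : μ (Set.Iic 0) = 0)
    (hμfin : ∫⁻ s, ENNReal.ofReal ((1 + s)⁻¹ ^ 2) ∂μ < ⊤)
    (hrep : ∀ x, 0 < x → f x = f 0 + a * x + b * x ^ 2 + ∫ s, loewnerKernel s x ∂μ) :
    L f = f 0 * L (fun _ => 1) + a * L (fun x => x) + b * L (fun x => x ^ 2) +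
      ∫ s, L (loewnerKernel s) ∂μ := by
  have hrep₀ (x : ℝ) (hx : 0 ≤ x) :
      f x = f 0 + a * x + b * x ^ 2 + ∫ s, loewnerKernel s x ∂μ := by
    obtain rfl | hx := hx.eq_or_lt
    · simp [loewnerKernel]
    · exact hrep x hx
  obtain ⟨ι, I, w, x, hx, hL⟩ := hL
  simp_rw [hL]
  rw [integral_finsetSum _ fun i hi =>
    (integrable_loewnerKernel hμ0 hμfin (hx i hi)).const_mul _]
  simp_rw [integral_const_mul, Finset.mul_sum, ← Finset.sum_add_distrib]
  refine Finset.sum_congr rfl fun i hi => ?_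
  rw [hrep₀ _ (hx i hi)]
  ring

theorem lt_of_resolvent_lt (hL₁ : IsFiniteQuadrature L₁) (hL₂ : IsFiniteQuadrature L₂)
    (hone : L₁ (fun _ => 1) = L₂ (fun _ => 1)) (hid : L₁ (fun x => x) = L₂ (fun x => x))
    (hsq : L₁ (fun x => x ^ 2) = L₂ (fun x => x ^ 2))
    (hres : ∀ s : ℝ, 0 < s → L₁ (fun x => (x + s)⁻¹) < L₂ (fun x => (x + s)⁻¹))
    (hμ : μ ≠ 0) (hμ0 : μ (Set.Iic 0) = 0)
    (hμfin : ∫⁻ s, ENNReal.ofReal ((1 + s)⁻¹ ^ 2) ∂μ < ⊤)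
    (hrep : ∀ x, 0 < x → f x = f 0 + a * x + b * x ^ 2 + ∫ s, loewnerKernel s x ∂μ) :
    L₁ f < L₂ f := by
  rw [hL₁.apply_eq_add_integral hμ0 hμfin hrep, hL₂.apply_eq_add_integral hμ0 hμfin hrep,
    hone, hid, hsq]
  gcongr
  refine integral_lt_integral_of_ae_lt hμ (hL₁.integrable_apply_loewnerKernel hμ0 hμfin)
    (hL₂.integrable_apply_loewnerKernel hμ0 hμfin) ?_
  filter_upwards [ae_pos_of_measure_Iic_eq_zero hμ0] with s hs
  rw [hL₁.apply_loewnerKernel hs, hL₂.apply_loewnerKernel hs, hone, hid]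
  gcongr
  exact hres s hs

end IsFiniteQuadrature

end Quadrature

section TraceGap

variable {ι 𝕜 : Type*} [Fintype ι] [RCLike 𝕜] {ρ σ τ V W : Matrix ι ι 𝕜} {s : ℝ}

open scoped MatrixOrder in
lemma spectrum_real_nonneg [DecidableEq ι] (hρ : ρ.PosSemidef) {x : ℝ} (hx : x ∈ spectrum ℝ ρ) :
    0 ≤ x :=
  spectrum_nonneg_of_nonneg hρ.nonneg hx

open scoped MatrixOrder in
lemma mul_eq_zero_of_trace_mul_mul_conjTranspose_eq_zero (hρ : ρ.PosSemidef)
    (h : trace (V * ρ * Vᴴ) = 0) : V * ρ = 0 := by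
  classical
  obtain ⟨B, rfl⟩ := CStarAlgebra.nonneg_iff_eq_star_mul_self.1 hρ.nonneg
  rw [star_eq_conjTranspose] at h ⊢
  have hVB : V * Bᴴ = 0 := by
    rw [← trace_mul_conjTranspose_self_eq_zero_iff, ← h, conjTranspose_mul,
      conjTranspose_conjTranspose]
    simp only [Matrix.mul_assoc]
  rw [← Matrix.mul_assoc, hVB, Matrix.zero_mul]

lemma commute_of_commute_sq [DecidableEq ι] (hρ : ρ.PosSemidef) (h : Commute (ρ ^ 2) τ) :
    Commute ρ τ := by
  have hsqrt : cfc Real.sqrt (ρ ^ 2) = ρ := by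
    rw [← cfc_comp_pow Real.sqrt 2 ρ (ha := hρ.1.isSelfAdjoint)]
    conv_rhs => rw [← cfc_id' ℝ ρ hρ.1.isSelfAdjoint]
    exact cfc_congr fun x hx => Real.sqrt_sq (spectrum_real_nonneg hρ hx)
  rw [← hsqrt]
  exact h.cfc_real _

lemma mul_conjTranspose_eq_of_isHermitian (hσ : σ.IsHermitian) (hVσ : (V * σ).IsHermitian) :
    σ * Vᴴ = V * σ := by
  rw [← hVσ.eq, conjTranspose_mul, hσ.eq]

theorem trace_mul_sub_trace_mul_eq (hρ : ρ.IsHermitian) (hσ : σ.IsHermitian)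
    (hV : V * ρ + s • (V * σ) = σ) (hVσ : (V * σ).IsHermitian) (hW : ρ * W + s • (W * σ) = σ) :
    trace (V * σ) - trace (W * σ) =
      trace ((V - Wᴴ) * ρ * (V - Wᴴ)ᴴ) + s • trace ((V - W) * σ * (V - W)ᴴ) := by
  have hσV : σ * Vᴴ = V * σ := mul_conjTranspose_eq_of_isHermitian hσ hVσ
  have hV' : ρ * Vᴴ + s • (σ * Vᴴ) = σ := by
    simpa [hρ.eq, hσ.eq] using congrArg conjTranspose hV
  have hVV : trace (V * ρ * Vᴴ) + s • trace (V * σ * Vᴴ) = trace (V * σ) := by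
    rw [← trace_smul, ← trace_add, ← Matrix.smul_mul, ← Matrix.add_mul, hV, hσV]
  have hVW : trace (V * ρ * W) + s • trace (W * σ * Vᴴ) = trace (W * σ) := by
    rw [Matrix.mul_assoc W, hσV, trace_mul_comm W, trace_mul_comm W, ← trace_smul, ← trace_add,
      ← Matrix.smul_mul, ← Matrix.add_mul, hV]
  have hWV : trace (Wᴴ * ρ * Vᴴ) + s • trace (V * σ * Wᴴ) = trace (Wᴴ * σ) := by
    rw [trace_mul_comm _ Wᴴ, ← hσV, ← trace_smul, ← trace_add, Matrix.mul_assoc,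
      ← Matrix.mul_smul, ← Matrix.mul_add, hV']
  have hWW : trace (Wᴴ * ρ * W) + s • trace (W * σ * Wᴴ) = trace (Wᴴ * σ) := by
    rw [trace_mul_comm _ Wᴴ, Matrix.mul_assoc, ← trace_smul, ← trace_add, ← Matrix.mul_smul,
      ← Matrix.mul_add, hW]
  simp only [conjTranspose_sub, conjTranspose_conjTranspose, Matrix.sub_mul, Matrix.mul_sub,
    trace_sub, smul_sub]
  linear_combination -hVV + hVW + hWV - hWW

theorem mul_eq_mul_of_re_trace_le (hρ : ρ.PosSemidef) (hσ : σ.PosSemidef) (hs : 0 < s)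
    (hV : V * ρ + s • (V * σ) = σ) (hVσ : (V * σ).IsHermitian) (hW : ρ * W + s • (W * σ) = σ)
    (hle : RCLike.re (trace (V * σ)) ≤ RCLike.re (trace (W * σ))) :
    V * ρ = Wᴴ * ρ ∧ V * σ = W * σ := by
  have hX := (hρ.mul_mul_conjTranspose_same (V - Wᴴ)).trace_nonneg
  have hY := (hσ.mul_mul_conjTranspose_same (V - W)).trace_nonneg
  have hgap := congrArg RCLike.re (trace_mul_sub_trace_mul_eq hρ.1 hσ.1 hV hVσ hW)
  rw [map_sub, map_add, RCLike.smul_re] at hgap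
  have hX₀ := (RCLike.nonneg_iff.1 hX).1
  have hY₀ := mul_nonneg hs.le (RCLike.nonneg_iff.1 hY).1
  have hXre : RCLike.re (trace ((V - Wᴴ) * ρ * (V - Wᴴ)ᴴ)) = 0 := by linarith
  have hYre : RCLike.re (trace ((V - W) * σ * (V - W)ᴴ)) = 0 :=
    (mul_eq_zero.1 (by linarith)).resolve_left hs.ne'
  rw [← sub_eq_zero, ← Matrix.sub_mul, ← sub_eq_zero (a := V * σ), ← Matrix.sub_mul]
  exact ⟨mul_eq_zero_of_trace_mul_mul_conjTranspose_eq_zero hρ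
      (RCLike.ext (by simpa using hXre) (by simpa using (RCLike.nonneg_iff.1 hX).2)),
    mul_eq_zero_of_trace_mul_mul_conjTranspose_eq_zero hσ
      (RCLike.ext (by simpa using hYre) (by simpa using (RCLike.nonneg_iff.1 hY).2))⟩

lemma smul_mul_commutator_eq (hV : V * ρ + s • (V * σ) = σ) (hWσ : W * σ = V * σ)
    (hWρ : W * ρ = V * ρ) (hρW : ρ * W = V * ρ) :
    s • (V * (ρ * σ - σ * ρ)) = ρ * σ - σ * ρ := by
  have hρσ : ρ * σ = V * ρ * ρ + s • (V * ρ * σ) := by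
    conv_lhs => rw [← hV]
    rw [Matrix.mul_add, Matrix.mul_smul, ← hWσ, ← hWρ, ← Matrix.mul_assoc, ← Matrix.mul_assoc,
      hρW, hWρ]
  have hσρ : σ * ρ = V * ρ * ρ + s • (V * σ * ρ) := by
    conv_lhs => rw [← hV]
    rw [Matrix.add_mul, Matrix.smul_mul]
  conv_rhs => rw [hρσ, hσρ]
  rw [Matrix.mul_sub, smul_sub, ← Matrix.mul_assoc, ← Matrix.mul_assoc]
  abel

lemma mul_mul_commutator_eq_zero (hρ : ρ.IsHermitian) (hσ : σ.IsHermitian)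
    (hστ : Commute σ τ) (hστσ : σ * τ * σ = σ) (hρστ : ρ * (σ * τ) = ρ) (hστρ : σ * τ * ρ = ρ)
    (hV : V * ρ + s • (V * σ) = σ) (hVσ : (V * σ).IsHermitian)
    (hVρ : V * ρ = Wᴴ * ρ) (hVW : V * σ = W * σ) :
    ρ * τ * (ρ * σ - σ * ρ) = 0 := by
  have hWρ : W * ρ = V * ρ := by
    rw [← hστρ, ← Matrix.mul_assoc, ← Matrix.mul_assoc, ← Matrix.mul_assoc, ← Matrix.mul_assoc,
      hVW]
  have hρV : ρ * Vᴴ = V * ρ := by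
    refine mul_conjTranspose_eq_of_isHermitian hρ ?_
    rw [eq_sub_of_add_eq hV]
    exact hσ.sub (hVσ.smul (.all s))
  have hρW : ρ * W = V * ρ := by
    rw [← hρV]
    simpa [hρ.eq] using (congrArg conjTranspose hVρ).symm
  have hVC := smul_mul_commutator_eq hV hVW.symm hWρ hρW
  set C := ρ * σ - σ * ρ with hC
  have hστC : σ * τ * C = C := by
    rw [hC, Matrix.mul_sub, ← Matrix.mul_assoc, ← Matrix.mul_assoc, hστρ, hστσ]
  have hρτV : ρ * τ * (V * σ) = V * ρ := by
    rw [← mul_conjTranspose_eq_of_isHermitian hσ hVσ, ← Matrix.mul_assoc, Matrix.mul_assoc ρ,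
      ← hστ.eq, hρστ, hρV]
  have hVσC : V * σ * (τ * C) = V * C := by
    rw [Matrix.mul_assoc, ← Matrix.mul_assoc σ, hστC]
  calc ρ * τ * C = s • (ρ * τ * (V * σ * (τ * C))) := by
        rw [hVσC, ← Matrix.mul_smul, hVC]
    _ = s • ((σ - s • (V * σ)) * (τ * C)) := by
        rw [← Matrix.mul_assoc, hρτV, ← eq_sub_of_add_eq hV]
    _ = 0 := by
        rw [Matrix.sub_mul, Matrix.smul_mul, hVσC, hVC, ← Matrix.mul_assoc, hστC, sub_self,
          smul_zero]

lemma commute_of_mul_mul_commutator_eq_zero (hρ : ρ.PosSemidef)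
    (hτ : τ.IsHermitian) (hστ : Commute σ τ) (hρστ : ρ * (σ * τ) = ρ) (hστρ : σ * τ * ρ = ρ)
    (hC : ρ * τ * (ρ * σ - σ * ρ) = 0) : Commute ρ σ := by
  classical
  have hsq : ρ * τ * ρ = ρ ^ 2 * τ := by
    rw [Matrix.mul_sub, sub_eq_zero, ← Matrix.mul_assoc, ← Matrix.mul_assoc,
      Matrix.mul_assoc ρ τ σ, ← hστ.eq, hρστ] at hC
    rw [sq, ← hC, Matrix.mul_assoc _ σ, Matrix.mul_assoc _ ρ, hρστ]
  have hτ_comm : Commute ρ τ := by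
    refine commute_of_commute_sq hρ ?_
    have hsq' : ρ * τ * ρ = τ * ρ ^ 2 := by
      simpa [hρ.1.eq, hτ.eq, Matrix.mul_assoc] using congrArg conjTranspose hsq
    exact hsq.symm.trans hsq'
  calc ρ * σ = σ * (τ * ρ) * σ := by rw [← Matrix.mul_assoc, hστρ]
    _ = σ * (ρ * (σ * τ)) := by rw [← hτ_comm.eq, Matrix.mul_assoc, Matrix.mul_assoc, hστ.eq]
    _ = σ * ρ := by rw [hρστ]

end TraceGap

section SpectralSums

variable {n : ℕ} {A B : Matrix (Fin n) (Fin n) ℂ}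

lemma continuousOn_spectrum (A : Matrix (Fin n) (Fin n) ℂ) (g : ℝ → ℝ) :
    ContinuousOn g (spectrum ℝ A) :=
  A.finite_real_spectrum.continuousOn g

lemma cfc_eq_sum_specProj (A : Matrix (Fin n) (Fin n) ℂ) (g : ℝ → ℝ) :
    cfc g A = ∑ a ∈ A.finite_real_spectrum.toFinset, g a • specProj A a := by
  have hdecomp : (spectrum ℝ A).EqOn g
      (∑ a ∈ A.finite_real_spectrum.toFinset, fun x => g a • if x = a then (1 : ℝ) else 0) := by
    intro x hx
    simp [Finset.sum_apply, hx]
  rw [cfc_congr hdecomp, cfc_sum _ _ _ (fun _ _ => continuousOn_spectrum A _)]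
  exact Finset.sum_congr rfl fun a _ => cfc_smul _ _ _ (continuousOn_spectrum A _)

/-- The double functional calculus `∑ F(a, b) P_a Q_b` of two Hermitian matrices `A` and `B`, where
`P_a` and `Q_b` are the spectral projections of `A` and `B`. -/
noncomputable def doubleCfc (F : ℝ → ℝ → ℝ) (A B : Matrix (Fin n) (Fin n) ℂ) :
    Matrix (Fin n) (Fin n) ℂ :=
  ∑ a ∈ A.finite_real_spectrum.toFinset, ∑ b ∈ B.finite_real_spectrum.toFinset,
    F a b • (specProj A a * specProj B b)

lemma doubleCfc_congr {F G : ℝ → ℝ → ℝ}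
    (h : ∀ a ∈ spectrum ℝ A, ∀ b ∈ spectrum ℝ B, F a b = G a b) :
    doubleCfc F A B = doubleCfc G A B :=
  Finset.sum_congr rfl fun a ha => Finset.sum_congr rfl fun b hb => by
    rw [h a (by simpa using ha) b (by simpa using hb)]

lemma doubleCfc_mul_eq_cfc_mul_cfc (g h : ℝ → ℝ) (A B : Matrix (Fin n) (Fin n) ℂ) :
    doubleCfc (fun a b => g a * h b) A B = cfc g A * cfc h B := by
  simp_rw [doubleCfc, cfc_eq_sum_specProj, Finset.sum_mul_sum,
    smul_mul_smul_comm]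

lemma doubleCfc_add (F G : ℝ → ℝ → ℝ) (A B : Matrix (Fin n) (Fin n) ℂ) :
    doubleCfc (fun a b => F a b + G a b) A B = doubleCfc F A B + doubleCfc G A B := by
  simp_rw [doubleCfc, add_smul, Finset.sum_add_distrib]

lemma doubleCfc_const_mul (c : ℝ) (F : ℝ → ℝ → ℝ) (A B : Matrix (Fin n) (Fin n) ℂ) :
    doubleCfc (fun a b => c * F a b) A B = c • doubleCfc F A B := by
  simp_rw [doubleCfc, mul_smul, Finset.smul_sum]

lemma mul_cfc_eq_cfc (hA : A.IsHermitian) (g : ℝ → ℝ) :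
    A * cfc g A = cfc (fun x => x * g x) A := by
  rw [cfc_mul _ _ _ (continuousOn_spectrum A _) (continuousOn_spectrum A _),
    cfc_id' ℝ A hA.isSelfAdjoint]

lemma cfc_mul_self_eq_cfc (hA : A.IsHermitian) (g : ℝ → ℝ) :
    cfc g A * A = cfc (fun x => g x * x) A := by
  rw [cfc_mul _ _ _ (continuousOn_spectrum A _) (continuousOn_spectrum A _),
    cfc_id' ℝ A hA.isSelfAdjoint]

lemma mul_specProj (hA : A.IsHermitian) (a : ℝ) : A * specProj A a = a • specProj A a := by
  rw [specProj, mul_cfc_eq_cfc hA, ← cfc_smul _ _ _ (continuousOn_spectrum A _)]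
  refine cfc_congr fun x _ => ?_
  by_cases h : x = a <;> simp [h]

lemma specProj_mul (hA : A.IsHermitian) (a : ℝ) : specProj A a * A = a • specProj A a := by
  rw [specProj, cfc_mul_self_eq_cfc hA, ← cfc_smul _ _ _ (continuousOn_spectrum A _)]
  refine cfc_congr fun x _ => ?_
  by_cases h : x = a <;> simp [h]

lemma mul_doubleCfc (hA : A.IsHermitian) (F : ℝ → ℝ → ℝ) (B : Matrix (Fin n) (Fin n) ℂ) :
    A * doubleCfc F A B = doubleCfc (fun a b => a * F a b) A B := by
  simp_rw [doubleCfc, Finset.mul_sum, Matrix.mul_smul, ← Matrix.mul_assoc, mul_specProj hA,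
    Matrix.smul_mul, smul_smul, mul_comm]

lemma doubleCfc_mul (hB : B.IsHermitian) (F : ℝ → ℝ → ℝ) (A : Matrix (Fin n) (Fin n) ℂ) :
    doubleCfc F A B * B = doubleCfc (fun a b => b * F a b) A B := by
  simp_rw [doubleCfc, Finset.sum_mul, Matrix.smul_mul, Matrix.mul_assoc, specProj_mul hB,
    Matrix.mul_smul, smul_smul, mul_comm]

end SpectralSums

section MoorePenrose

variable {n : ℕ} {ρ σ : Matrix (Fin n) (Fin n) ℂ}

lemma mpow_isHermitian (A : Matrix (Fin n) (Fin n) ℂ) (t : ℝ) : (mpow A t).IsHermitian :=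
  cfc_predicate _ A

lemma mpow_one (hσ : σ.IsHermitian) : mpow σ 1 = σ := by
  conv_rhs => rw [← cfc_id' ℝ σ hσ.isSelfAdjoint]
  exact cfc_congr fun x _ => by by_cases h : x = 0 <;> simp [h]

lemma mpow_mul_mpow (hσ : σ.PosSemidef) (s t : ℝ) : mpow σ s * mpow σ t = mpow σ (s + t) := by
  rw [mpow, mpow, ← cfc_mul _ _ _ (continuousOn_spectrum σ _) (continuousOn_spectrum σ _)]
  refine cfc_congr fun x hx => ?_
  by_cases h : x = 0
  · simp [h]
  · simp [h, Real.rpow_add ((spectrum_real_nonneg hσ hx).lt_of_ne' h)]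

lemma mul_mpow_zero (hσ : σ.PosSemidef) (hsupp : ∀ v, σ *ᵥ v = 0 → ρ *ᵥ v = 0) :
    ρ * mpow σ 0 = ρ := by
  have hσP : σ * (1 - mpow σ 0) = 0 := by
    have hσ₀ : σ * mpow σ 0 = σ := by
      simpa [mpow_one hσ.1] using mpow_mul_mpow hσ 1 0
    rw [Matrix.mul_sub, Matrix.mul_one, hσ₀, sub_self]
  have hρP : ρ * (1 - mpow σ 0) = 0 :=
    Matrix.ext_of_mulVec_single fun i => by
      rw [← mulVec_mulVec, hsupp _ (by rw [mulVec_mulVec, hσP, zero_mulVec]), zero_mulVec]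
  rwa [Matrix.mul_sub, Matrix.mul_one, sub_eq_zero, eq_comm] at hρP

lemma mpow_zero_mul (hρ : ρ.IsHermitian) (hσ : σ.PosSemidef)
    (hsupp : ∀ v, σ *ᵥ v = 0 → ρ *ᵥ v = 0) : mpow σ 0 * ρ = ρ := by
  simpa [hρ.eq, (mpow_isHermitian σ 0).eq] using congrArg conjTranspose (mul_mpow_zero hσ hsupp)

end MoorePenrose

section Divergences

variable {n : ℕ} {ρ σ : Matrix (Fin n) (Fin n) ℂ}

lemma Sf_eq_re_trace_doubleCfc (f : ℝ → ℝ) (ρ σ : Matrix (Fin n) (Fin n) ℂ) :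
    Sf f ρ σ = (trace (doubleCfc (fun a b => b * f (a / b)) ρ σ)).re := by
  simp_rw [Sf, finsum_mem_eq_finite_toFinset_sum _ finite_real_spectrum, doubleCfc,
    trace_sum, Complex.re_sum, trace_smul, Complex.smul_re, smul_eq_mul]
  refine Finset.sum_congr rfl fun a _ => Finset.sum_congr rfl fun b _ => ?_
  split_ifs with hb <;> simp [hb]

lemma Sf_one (hρ : ρ.IsHermitian) (hσ : σ.IsHermitian) :
    Sf (fun _ => 1) ρ σ = (trace σ).re := by
  rw [Sf_eq_re_trace_doubleCfc, doubleCfc_congr (G := fun a b => 1 * b) (by simp),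
    doubleCfc_mul_eq_cfc_mul_cfc, cfc_const_one ℝ ρ hρ.isSelfAdjoint,
    cfc_id' ℝ σ hσ.isSelfAdjoint, one_mul]

lemma Sf_id (hρ : ρ.IsHermitian) (hσ : σ.PosSemidef)
    (hsupp : ∀ v, σ *ᵥ v = 0 → ρ *ᵥ v = 0) :
    Sf (fun x => x) ρ σ = (trace ρ).re := by
  have hmul (a b : ℝ) : b * (a / b) = a * if b = 0 then 0 else b ^ (0 : ℝ) := by
    by_cases hb : b = 0
    · simp [hb]
    · simp [hb, mul_div_cancel₀]
  rw [Sf_eq_re_trace_doubleCfc, doubleCfc_congr fun a _ b _ => hmul a b,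
    doubleCfc_mul_eq_cfc_mul_cfc, cfc_id' ℝ ρ hρ.isSelfAdjoint, ← mpow, mul_mpow_zero hσ hsupp]

lemma Sf_sq (hρ : ρ.IsHermitian) (σ : Matrix (Fin n) (Fin n) ℂ) :
    Sf (fun x => x ^ 2) ρ σ = (trace (ρ ^ 2 * mpow σ (-1))).re := by
  have hmul (a b : ℝ) : b * (a / b) ^ 2 = a ^ 2 * if b = 0 then 0 else b ^ (-1 : ℝ) := by
    by_cases hb : b = 0
    · simp [hb]
    · simp only [hb, if_false, Real.rpow_neg_one]
      field_simp
  rw [Sf_eq_re_trace_doubleCfc, doubleCfc_congr fun a _ b _ => hmul a b,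
    doubleCfc_mul_eq_cfc_mul_cfc, cfc_pow_id ρ 2 hρ.isSelfAdjoint, ← mpow]

/-- The noncommutative Radon–Nikodym derivative `σ^{-1/2} ρ σ^{-1/2}` at which the maximal
divergence evaluates `f`. -/
noncomputable def relDensity (ρ σ : Matrix (Fin n) (Fin n) ℂ) : Matrix (Fin n) (Fin n) ℂ :=
  mpow σ (-(1/2)) * ρ * mpow σ (-(1/2))

lemma maxSf_eq_re_trace_cfc_relDensity (f : ℝ → ℝ) (ρ σ : Matrix (Fin n) (Fin n) ℂ) :
    maxSf f ρ σ = (trace (mpow σ (1/2) * cfc f (relDensity ρ σ) * mpow σ (1/2))).re :=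
  rfl

lemma relDensity_isHermitian (hρ : ρ.IsHermitian) (σ : Matrix (Fin n) (Fin n) ℂ) :
    (relDensity ρ σ).IsHermitian := by
  simpa [relDensity, (mpow_isHermitian σ _).eq] using
    isHermitian_mul_mul_conjTranspose (mpow σ (-(1/2))) hρ

lemma relDensity_posSemidef (hρ : ρ.PosSemidef) (σ : Matrix (Fin n) (Fin n) ℂ) :
    (relDensity ρ σ).PosSemidef := by
  simpa [relDensity, (mpow_isHermitian σ _).eq] using
    hρ.mul_mul_conjTranspose_same (mpow σ (-(1/2)))

lemma mpow_half_mul_self (hσ : σ.PosSemidef) : mpow σ (1/2) * mpow σ (1/2) = σ := by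
  rw [mpow_mul_mpow hσ, add_halves, mpow_one hσ.1]

lemma mpow_half_mul_relDensity (hρ : ρ.IsHermitian) (hσ : σ.PosSemidef)
    (hsupp : ∀ v, σ *ᵥ v = 0 → ρ *ᵥ v = 0) :
    mpow σ (1/2) * relDensity ρ σ = ρ * mpow σ (-(1/2)) := by
  rw [relDensity, ← Matrix.mul_assoc, ← Matrix.mul_assoc, mpow_mul_mpow hσ, add_neg_cancel,
    mpow_zero_mul hρ hσ hsupp]

lemma relDensity_mul_mpow_half (hσ : σ.PosSemidef) (hsupp : ∀ v, σ *ᵥ v = 0 → ρ *ᵥ v = 0) :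
    relDensity ρ σ * mpow σ (1/2) = mpow σ (-(1/2)) * ρ := by
  rw [relDensity, Matrix.mul_assoc, mpow_mul_mpow hσ, neg_add_cancel, Matrix.mul_assoc,
    mul_mpow_zero hσ hsupp]

lemma maxSf_one (hρ : ρ.IsHermitian) (hσ : σ.PosSemidef) :
    maxSf (fun _ => 1) ρ σ = (trace σ).re := by
  rw [maxSf_eq_re_trace_cfc_relDensity,
    cfc_const_one ℝ _ (relDensity_isHermitian hρ σ).isSelfAdjoint, mul_one, mpow_half_mul_self hσ]

lemma maxSf_id (hρ : ρ.IsHermitian) (hσ : σ.PosSemidef)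
    (hsupp : ∀ v, σ *ᵥ v = 0 → ρ *ᵥ v = 0) :
    maxSf (fun x => x) ρ σ = (trace ρ).re := by
  rw [maxSf_eq_re_trace_cfc_relDensity,
    cfc_id' ℝ _ (relDensity_isHermitian hρ σ).isSelfAdjoint, mpow_half_mul_relDensity hρ hσ hsupp,
    Matrix.mul_assoc, mpow_mul_mpow hσ, neg_add_cancel, mul_mpow_zero hσ hsupp]

lemma maxSf_sq (hρ : ρ.IsHermitian) (hσ : σ.PosSemidef)
    (hsupp : ∀ v, σ *ᵥ v = 0 → ρ *ᵥ v = 0) :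
    maxSf (fun x => x ^ 2) ρ σ = (trace (ρ ^ 2 * mpow σ (-1))).re := by
  have hρτρ : mpow σ (1/2) * relDensity ρ σ ^ 2 * mpow σ (1/2) = ρ * mpow σ (-1) * ρ := by
    rw [sq, ← Matrix.mul_assoc, mpow_half_mul_relDensity hρ hσ hsupp, Matrix.mul_assoc,
      relDensity_mul_mpow_half hσ hsupp, Matrix.mul_assoc, ← Matrix.mul_assoc (mpow σ _),
      mpow_mul_mpow hσ, ← neg_add, add_halves, Matrix.mul_assoc]
  rw [maxSf_eq_re_trace_cfc_relDensity,
    cfc_pow_id _ 2 (relDensity_isHermitian hρ σ).isSelfAdjoint, hρτρ, trace_mul_comm,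
    ← Matrix.mul_assoc, sq]

lemma isFiniteQuadrature_Sf (hρ : ρ.PosSemidef) (hσ : σ.PosSemidef) :
    IsFiniteQuadrature (fun g => Sf g ρ σ) := by
  refine ⟨ℝ × ℝ, ρ.finite_real_spectrum.toFinset ×ˢ σ.finite_real_spectrum.toFinset,
    fun p => p.2 * (trace (specProj ρ p.1 * specProj σ p.2)).re, fun p => p.1 / p.2, ?_, ?_⟩
  · rintro ⟨a, b⟩ hab
    simp only [Finset.mem_product, Set.Finite.mem_toFinset] at hab
    exact div_nonneg (spectrum_real_nonneg hρ hab.1) (spectrum_real_nonneg hσ hab.2)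
  · intro g
    simp only [Sf_eq_re_trace_doubleCfc, doubleCfc, trace_sum, Complex.re_sum, trace_smul,
      Complex.smul_re, smul_eq_mul, Finset.sum_product, mul_right_comm]

lemma isFiniteQuadrature_maxSf (hρ : ρ.PosSemidef) (σ : Matrix (Fin n) (Fin n) ℂ) :
    IsFiniteQuadrature (fun g => maxSf g ρ σ) := by
  refine ⟨ℝ, (relDensity ρ σ).finite_real_spectrum.toFinset,
    fun t => (trace (mpow σ (1/2) * specProj (relDensity ρ σ) t * mpow σ (1/2))).re,
    fun t => t, fun t ht => ?_, fun g => ?_⟩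
  · exact spectrum_real_nonneg (relDensity_posSemidef hρ σ) (by simpa using ht)
  · simp only [maxSf_eq_re_trace_cfc_relDensity, cfc_eq_sum_specProj, Finset.mul_sum,
      Finset.sum_mul, Matrix.mul_smul, Matrix.smul_mul, trace_sum, Complex.re_sum, trace_smul,
      Complex.smul_re, smul_eq_mul, mul_comm]

/-- The solution `W` of `ρ W + s W σ = σ` given by the double functional calculus; `W σ` has trace
`S_f(ρ‖σ)` for `f x = (x + s)⁻¹`. -/
noncomputable def sylvesterResolvent (s : ℝ) (ρ σ : Matrix (Fin n) (Fin n) ℂ) :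
    Matrix (Fin n) (Fin n) ℂ :=
  doubleCfc (fun a b => b / (a + s * b)) ρ σ

/-- The solution `V` of `V (ρ + s σ) = σ` supported on the range of `σ`; `V σ` has trace
`Ŝ_f(ρ‖σ)` for `f x = (x + s)⁻¹`. -/
noncomputable def relResolvent (s : ℝ) (ρ σ : Matrix (Fin n) (Fin n) ℂ) :
    Matrix (Fin n) (Fin n) ℂ :=
  mpow σ (1/2) * cfc (fun x => (x + s)⁻¹) (relDensity ρ σ) * mpow σ (-(1/2))

variable {s : ℝ}

lemma mul_sylvesterResolvent_add (hρ : ρ.PosSemidef) (hσ : σ.PosSemidef) (hs : 0 < s) :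
    ρ * sylvesterResolvent s ρ σ + s • (sylvesterResolvent s ρ σ * σ) = σ := by
  have hcancel : ∀ a ∈ spectrum ℝ ρ, ∀ b ∈ spectrum ℝ σ,
      a * (b / (a + s * b)) + s * (b * (b / (a + s * b))) = 1 * b := by
    intro a ha b hb
    have ha := spectrum_real_nonneg hρ ha
    obtain rfl | hb := (spectrum_real_nonneg hσ hb).eq_or_lt
    · simp
    · have : 0 < a + s * b := by positivity
      field_simp
  rw [sylvesterResolvent, mul_doubleCfc hρ.1, doubleCfc_mul hσ.1, ← doubleCfc_const_mul,
    ← doubleCfc_add, doubleCfc_congr hcancel, doubleCfc_mul_eq_cfc_mul_cfc,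
    cfc_const_one ℝ ρ hρ.1.isSelfAdjoint, cfc_id' ℝ σ hσ.1.isSelfAdjoint, one_mul]

lemma Sf_inv_add (hσ : σ.IsHermitian) (s : ℝ) (ρ : Matrix (Fin n) (Fin n) ℂ) :
    Sf (fun x => (x + s)⁻¹) ρ σ = (trace (sylvesterResolvent s ρ σ * σ)).re := by
  have hdiv (a b : ℝ) : b * (a / b + s)⁻¹ = b * (b / (a + s * b)) := by
    by_cases hb : b = 0
    · simp [hb]
    · rw [div_add' _ _ _ hb, inv_div]
  rw [Sf_eq_re_trace_doubleCfc, sylvesterResolvent, doubleCfc_mul hσ,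
    doubleCfc_congr fun a _ b _ => hdiv a b]

lemma relResolvent_mul (hσ : σ.PosSemidef) (s : ℝ) (ρ : Matrix (Fin n) (Fin n) ℂ) :
    relResolvent s ρ σ * σ =
      mpow σ (1/2) * cfc (fun x => (x + s)⁻¹) (relDensity ρ σ) * mpow σ (1/2) := by
  have hGσ : mpow σ (-(1/2)) * σ = mpow σ (1/2) := by
    have h := mpow_mul_mpow hσ (-(1/2)) 1
    rw [mpow_one hσ.1] at h
    rw [h]
    norm_num
  rw [relResolvent, Matrix.mul_assoc, hGσ]

lemma relResolvent_mul_isHermitian (hσ : σ.PosSemidef) (s : ℝ)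
    (ρ : Matrix (Fin n) (Fin n) ℂ) : (relResolvent s ρ σ * σ).IsHermitian := by
  have hR : (cfc (fun x : ℝ => (x + s)⁻¹) (relDensity ρ σ)).IsHermitian := cfc_predicate _ _
  simpa [relResolvent_mul hσ, (mpow_isHermitian σ _).eq] using
    isHermitian_mul_mul_conjTranspose (mpow σ (1/2)) hR

lemma relResolvent_mul_add (hρ : ρ.PosSemidef) (hσ : σ.PosSemidef)
    (hsupp : ∀ v, σ *ᵥ v = 0 → ρ *ᵥ v = 0) (hs : 0 < s) :
    relResolvent s ρ σ * ρ + s • (relResolvent s ρ σ * σ) = σ := by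
  have hT := relDensity_posSemidef hρ σ
  set R := cfc (fun x : ℝ => (x + s)⁻¹) (relDensity ρ σ) with hR
  have hresolvent : R * relDensity ρ σ + s • R = 1 := by
    rw [hR, cfc_mul_self_eq_cfc hT.1, ← cfc_smul _ _ _ (continuousOn_spectrum _ _),
      ← cfc_add _ _ _ (continuousOn_spectrum _ _) (continuousOn_spectrum _ _),
      ← cfc_const_one ℝ _ hT.1.isSelfAdjoint]
    refine cfc_congr fun x hx => ?_
    have : 0 < x + s := add_pos_of_nonneg_of_pos (spectrum_real_nonneg hT hx) hs
    simp only [smul_eq_mul]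
    field_simp
  calc relResolvent s ρ σ * ρ + s • (relResolvent s ρ σ * σ)
      = mpow σ (1/2) * (R * relDensity ρ σ + s • R) * mpow σ (1/2) := by
        rw [relResolvent_mul hσ, ← hR, relResolvent, ← hR, Matrix.mul_assoc _ _ ρ,
          ← relDensity_mul_mpow_half hσ hsupp]
        simp only [Matrix.mul_add, Matrix.add_mul, Matrix.mul_smul, Matrix.smul_mul,
          Matrix.mul_assoc]
    _ = σ := by rw [hresolvent, Matrix.mul_one, mpow_half_mul_self hσ]

lemma maxSf_inv_add (hσ : σ.PosSemidef) (s : ℝ) (ρ : Matrix (Fin n) (Fin n) ℂ) :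
    maxSf (fun x => (x + s)⁻¹) ρ σ = (trace (relResolvent s ρ σ * σ)).re := by
  rw [relResolvent_mul hσ, maxSf_eq_re_trace_cfc_relDensity]

theorem Sf_inv_add_lt_maxSf_inv_add (hρ : ρ.PosSemidef) (hσ : σ.PosSemidef)
    (hsupp : ∀ v, σ *ᵥ v = 0 → ρ *ᵥ v = 0) (hcomm : ¬ Commute ρ σ) (hs : 0 < s) :
    Sf (fun x => (x + s)⁻¹) ρ σ < maxSf (fun x => (x + s)⁻¹) ρ σ := by
  rw [Sf_inv_add hσ.1, maxSf_inv_add hσ]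
  contrapose! hcomm with hle
  have hV := relResolvent_mul_add hρ hσ hsupp hs
  have hVσ := relResolvent_mul_isHermitian hσ s ρ
  obtain ⟨hVρ, hVW⟩ := mul_eq_mul_of_re_trace_le hρ hσ hs hV hVσ
    (mul_sylvesterResolvent_add hρ hσ hs) hle
  have hστ : σ * mpow σ (-1) = mpow σ 0 := by
    simpa [mpow_one hσ.1] using mpow_mul_mpow hσ 1 (-1)
  have hτσ : mpow σ (-1) * σ = mpow σ 0 := by
    simpa [mpow_one hσ.1] using mpow_mul_mpow hσ (-1) 1
  have hcommτ : Commute σ (mpow σ (-1)) := hστ.trans hτσ.symm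
  have hρστ : ρ * (σ * mpow σ (-1)) = ρ := by rw [hστ, mul_mpow_zero hσ hsupp]
  have hστρ : σ * mpow σ (-1) * ρ = ρ := by rw [hστ, mpow_zero_mul hρ.1 hσ hsupp]
  have hστσ : σ * mpow σ (-1) * σ = σ := by
    rw [hστ, mpow_zero_mul hσ.1 hσ fun _ => id]
  exact commute_of_mul_mul_commutator_eq_zero hρ (mpow_isHermitian σ (-1)) hcommτ hρστ hστρ
    (mul_mul_commutator_eq_zero hρ.1 hσ.1 hcommτ hστσ hρστ hστρ hV hVσ hVρ hVW)

end Divergences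

section Main

variable {n : ℕ} {ρ : Matrix (Fin n) (Fin n) ℂ}

lemma measSupport_zero : measSupport 0 = ∅ :=
  Set.eq_empty_of_forall_notMem fun _ hx => by simpa using hx Set.univ Filter.univ_mem

lemma ne_zero_of_ncard_le_card_measSupport {μ : Measure ℝ} {X : Set ℝ} [Finite X]
    (hX : X.Nonempty) (h : ∃ S : Finset ℝ, (↑S : Set ℝ) ⊆ measSupport μ ∧ X.ncard ≤ S.card) :
    μ ≠ 0 := by
  rintro rfl
  obtain ⟨S, hS, hcard⟩ := h
  rw [measSupport_zero, Set.subset_empty_iff, Finset.coe_eq_empty] at hS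
  rw [hS, Finset.card_empty, Nat.le_zero, Set.ncard_eq_zero] at hcard
  exact hX.ne_empty hcard

lemma spectrum_relDensity_nonempty [Nontrivial (Matrix (Fin n) (Fin n) ℂ)]
    (hρ : ρ.IsHermitian) (σ : Matrix (Fin n) (Fin n) ℂ) : (spectrum ℝ (relDensity ρ σ)).Nonempty :=
  ContinuousFunctionalCalculus.spectrum_nonempty _ (relDensity_isHermitian hρ σ).isSelfAdjoint

theorem stmt1_general (ρ σ : Matrix (Fin n) (Fin n) ℂ) (hρ : ρ.PosSemidef) (hσ : σ.PosSemidef)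
    (hsupp : ∀ v : Fin n → ℂ, σ *ᵥ v = 0 → ρ *ᵥ v = 0) (hcomm : ρ * σ ≠ σ * ρ)
    (f : ℝ → ℝ) (a b : ℝ) (μ : Measure ℝ) (hμ : μ ≠ 0) (hμ0 : μ (Set.Iic (0 : ℝ)) = 0)
    (hμfin : ∫⁻ s, ENNReal.ofReal ((1 + s)⁻¹ ^ 2) ∂μ < ⊤)
    (hrep : ∀ x : ℝ, 0 < x →
      f x = f 0 + a * x + b * x ^ 2 + ∫ s, (x / (1 + s) - x / (x + s)) ∂μ) :
    Sf f ρ σ < maxSf f ρ σ :=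
  (isFiniteQuadrature_Sf hρ hσ).lt_of_resolvent_lt (isFiniteQuadrature_maxSf hρ σ)
    ((Sf_one hρ.1 hσ.1).trans (maxSf_one hρ.1 hσ).symm)
    ((Sf_id hρ.1 hσ hsupp).trans (maxSf_id hρ.1 hσ hsupp).symm)
    ((Sf_sq hρ.1 σ).trans (maxSf_sq hρ.1 hσ hsupp).symm)
    (fun _ => Sf_inv_add_lt_maxSf_inv_add hρ hσ hsupp hcomm) hμ hμ0 hμfin hrep

end Main

/-- if `ρ, σ` are positive semidefinite with `supp ρ ⊆ supp σ` and
`ρσ ≠ σρ`, and `f` is continuous on `[0,∞)` with the integral representation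
`f(x) = f(0) + a x + b x² + ∫ (x/(1+s) − x/(x+s)) dμ(s)` whose representing measure `μ`
has support of cardinality at least that of
`spec(σ^{-1/2} ρ σ^{-1/2}) ∪ {a·b' : a ∈ spec ρ, b' ∈ spec σ⁻¹}`, then
`S_f(ρ‖σ) < Ŝ_f(ρ‖σ)`. -/
theorem stmt1 {n : ℕ} (ρ σ : Matrix (Fin n) (Fin n) ℂ)
    (hρ : ρ.PosSemidef) (hσ : σ.PosSemidef)
    (hsupp : ∀ v : Fin n → ℂ, σ *ᵥ v = 0 → ρ *ᵥ v = 0)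
    (hcomm : ρ * σ ≠ σ * ρ)
    (f : ℝ → ℝ) (hcont : ContinuousOn f (Set.Ici (0 : ℝ)))
    (a b : ℝ) (hb : 0 ≤ b) (μ : Measure ℝ)
    (hμ0 : μ (Set.Iic (0 : ℝ)) = 0)
    (hμfin : ∫⁻ s, ENNReal.ofReal ((1 + s)⁻¹ ^ 2) ∂μ < ⊤)
    (hrep : ∀ x : ℝ, 0 < x →
      f x = f 0 + a * x + b * x ^ 2 + ∫ s, (x / (1 + s) - x / (x + s)) ∂μ)
    (hμsupp : ∃ S : Finset ℝ, (↑S : Set ℝ) ⊆ measSupport μ ∧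
      (spectrum ℝ (mpow σ (-(1/2)) * ρ * mpow σ (-(1/2))) ∪
        Set.image2 (fun x y => x * y) (spectrum ℝ ρ)
          (spectrum ℝ (mpow σ (-1)))).ncard ≤ S.card) :
    Sf f ρ σ < maxSf f ρ σ := by
  have : Nontrivial (Matrix (Fin n) (Fin n) ℂ) := nontrivial_of_ne _ _ hcomm
  have hμ := ne_zero_of_ncard_le_card_measSupport (spectrum_relDensity_nonempty hρ.1 σ).inl hμsupp
  exact stmt1_general ρ σ hρ hσ hsupp hcomm f a b μ hμ hμ0 hμfin hrep
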